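/- Let A ∈ SL(2,ℝ). There exist H, K ∈ SL(2,ℝ) with tr H = tr K = 0 and A = H·K if and only if |tr A| > 2 or A = ±1. -/

import Mathlib

open Matrix

/-!
With respect to the trace form `(X, Y) ↦ tr (X * Y)`, the trace-zero elements of `SL(2, F)` are the
negative vectors of square `-2` in the Lorentzian space `𝔰𝔩₂`. As `H⁻¹ = -H` for such an `H`, the
matrix `A` is a product of two of them iff some `H` among them is orthogonal to `A`, equivalently to
the traceless part of `A`, whose square is half the discriminant `(tr A)² - 4` of `A`. In Lorentzian
signature, a vector is orthogonal to some negative vector iff it is zero (`A` is scalar) or has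
positive square (`A` is hyperbolic).
-/

open scoped MatrixGroups

section CommRing

variable {R : Type*} [CommRing R]

lemma inv_eq_neg_of_trace_eq_zero {H : SL(2, R)} (hH : trace (H : Matrix (Fin 2) (Fin 2) R) = 0) :
    H⁻¹ = -H := by
  rw [trace_fin_two] at hH
  ext i j
  fin_cases i <;> fin_cases j <;>
    simp [adjugate_fin_two, eq_neg_of_add_eq_zero_left hH]

theorem exists_eq_mul_trace_eq_zero_iff (A : SL(2, R)) :
    (∃ H K : SL(2, R), trace (H : Matrix (Fin 2) (Fin 2) R) = 0 ∧
        trace (K : Matrix (Fin 2) (Fin 2) R) = 0 ∧ A = H * K) ↔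
      ∃ H : SL(2, R), trace (H : Matrix (Fin 2) (Fin 2) R) = 0 ∧
        trace (H * A : Matrix (Fin 2) (Fin 2) R) = 0 := by
  refine exists_congr fun H ↦ ?_
  rw [exists_and_left, and_congr_right_iff]
  intro hH
  have hK : (-(H * A) : SL(2, R)) = H⁻¹ * A := by rw [inv_eq_neg_of_trace_eq_zero hH, neg_mul]
  have hA (K : SL(2, R)) : A = H * K ↔ K = -(H * A) := by rw [hK, eq_inv_mul_iff_mul_eq, eq_comm]
  simp only [hA, exists_eq_right, Matrix.SpecialLinearGroup.coe_neg, trace_neg, neg_eq_zero,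
    Matrix.SpecialLinearGroup.coe_mul]

lemma exists_trace_eq_zero_of_mem_range_scalar {M : Matrix (Fin 2) (Fin 2) R}
    (hM : M ∈ Set.range (scalar (Fin 2))) :
    ∃ H : SL(2, R), trace (H : Matrix (Fin 2) (Fin 2) R) = 0 ∧
      trace (H * M : Matrix (Fin 2) (Fin 2) R) = 0 := by
  obtain ⟨c, rfl⟩ := hM
  exact ⟨⟨!![0, -1; 1, 0], by simp⟩, by simp [trace_fin_two], by simp [trace_fin_two]⟩

lemma coe_mem_range_scalar_iff [NoZeroDivisors R] (A : SL(2, R)) :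
    (A : Matrix (Fin 2) (Fin 2) R) ∈ Set.range (scalar (Fin 2)) ↔ A = 1 ∨ A = -1 := by
  constructor
  · rintro ⟨c, hc⟩
    have hc_sq : c * c = 1 := by simpa [← hc, sq] using A.det_coe
    exact (mul_self_eq_one_iff.mp hc_sq).imp (by rintro rfl; ext; simp [← hc])
      (by rintro rfl; ext; simp [← hc, map_neg])
  · rintro (rfl | rfl)
    · exact ⟨1, by simp⟩
    · exact ⟨-1, by rw [map_neg, map_one, Matrix.SpecialLinearGroup.coe_neg,
        Matrix.SpecialLinearGroup.coe_one]⟩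

-- Eliminate `H 1 1` and `M 1 0` by the two trace relations, then complete the square.
lemma sq_mul_discr_of_trace_mul_eq_zero {H M : Matrix (Fin 2) (Fin 2) R} (hH : H.trace = 0)
    (hHM : (H * M).trace = 0) :
    H 0 1 ^ 2 * M.discr =
      (H 0 1 * (M 0 0 - M 1 1) - 2 * H 0 0 * M 0 1) ^ 2 + H.det * (2 * M 0 1) ^ 2 := by
  simp only [trace_fin_two, mul_apply, Fin.sum_univ_two] at hH hHM
  rw [discr_fin_two, trace_fin_two, det_fin_two, det_fin_two]
  linear_combination 4 * H 0 1 * M 0 1 * hHM -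
    4 * M 0 1 * (H 0 1 * M 1 1 + H 0 0 * M 0 1) * hH

/-- The component orthogonal to `M` and to `1`, for the trace form `(X, Y) ↦ tr (X * Y)`, of the
half-turn `!![0, -1; 1, 0]` about `i`, whose pairing with `M` is `M 0 1 - M 1 0`. It is scaled by
`M.discr` to clear the denominator. -/
noncomputable def halfTurnPerp (M : Matrix (Fin 2) (Fin 2) R) : Matrix (Fin 2) (Fin 2) R :=
  M.discr • !![0, -1; 1, 0] - (M 0 1 - M 1 0) • ((2 : R) • M - M.trace • 1)

lemma halfTurnPerp_eq (M : Matrix (Fin 2) (Fin 2) R) :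
    halfTurnPerp M =
      !![-((M 0 1 - M 1 0) * (M 0 0 - M 1 1)), -M.discr - 2 * (M 0 1 - M 1 0) * M 0 1;
        M.discr - 2 * (M 0 1 - M 1 0) * M 1 0, (M 0 1 - M 1 0) * (M 0 0 - M 1 1)] := by
  ext i j
  fin_cases i <;> fin_cases j <;> simp [halfTurnPerp, trace_fin_two] <;> ring

lemma trace_halfTurnPerp (M : Matrix (Fin 2) (Fin 2) R) : (halfTurnPerp M).trace = 0 := by
  rw [halfTurnPerp_eq, trace_fin_two_of, neg_add_cancel]

lemma trace_halfTurnPerp_mul (M : Matrix (Fin 2) (Fin 2) R) : (halfTurnPerp M * M).trace = 0 := by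
  rw [halfTurnPerp_eq, discr_fin_two, det_fin_two, trace_fin_two M, eta_fin_two M, mul_fin_two,
    trace_fin_two_of]
  simp only [of_apply, cons_val', cons_val_zero, cons_val_one, cons_val_fin_one]
  ring

lemma det_halfTurnPerp (M : Matrix (Fin 2) (Fin 2) R) :
    (halfTurnPerp M).det = M.discr * (M.discr + (M 0 1 - M 1 0) ^ 2) := by
  rw [halfTurnPerp_eq, det_fin_two_of, discr_fin_two, trace_fin_two, det_fin_two]
  ring

end CommRing

section LinearOrderedRing

variable {R : Type*} [CommRing R] [LinearOrder R] [IsStrictOrderedRing R]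

lemma apply_zero_one_ne_zero_of_trace_eq_zero {H : Matrix (Fin 2) (Fin 2) R} (hdet : 0 < H.det)
    (hH : H.trace = 0) : H 0 1 ≠ 0 := by
  intro h
  rw [trace_fin_two] at hH
  rw [det_fin_two, h, zero_mul, sub_zero, eq_neg_of_add_eq_zero_left hH] at hdet
  linarith [mul_self_nonneg (H 1 1)]

theorem isHyperbolic_or_mem_range_scalar {H M : Matrix (Fin 2) (Fin 2) R} (hdet : 0 < H.det)
    (hH : H.trace = 0) (hHM : (H * M).trace = 0) :
    M.IsHyperbolic ∨ M ∈ Set.range (scalar (Fin 2)) := by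
  have hH01 : H 0 1 ≠ 0 := apply_zero_one_ne_zero_of_trace_eq_zero hdet hH
  refine (lt_or_ge 0 M.discr).imp_right fun hdiscr ↦ ?_
  have hsum : (H 0 1 * (M 0 0 - M 1 1) - 2 * H 0 0 * M 0 1) ^ 2 + H.det * (2 * M 0 1) ^ 2 ≤ 0 :=
    sq_mul_discr_of_trace_mul_eq_zero hH hHM ▸ mul_nonpos_of_nonneg_of_nonpos (sq_nonneg _) hdiscr
  have hM01 : M 0 1 = 0 := by
    by_contra hM01
    have : 0 < H.det * (2 * M 0 1) ^ 2 := by positivity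
    linarith [sq_nonneg (H 0 1 * (M 0 0 - M 1 1) - 2 * H 0 0 * M 0 1)]
  have hM00 : M 0 0 = M 1 1 := by
    simpa [hM01, hH01, sub_eq_zero, sq_nonpos_iff] using hsum
  have hM10 : M 1 0 = 0 := by
    rw [trace_fin_two] at hH
    simpa [trace_fin_two, mul_apply, hM01, hM00, hH01, eq_neg_of_add_eq_zero_left hH] using hHM
  refine ⟨M 1 1, ?_⟩
  ext i j
  fin_cases i <;> fin_cases j <;> simp [hM01, hM00, hM10]

lemma isHyperbolic_coe_iff (A : SL(2, R)) :
    (A : Matrix (Fin 2) (Fin 2) R).IsHyperbolic ↔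
      2 < |trace (A : Matrix (Fin 2) (Fin 2) R)| := by
  have four_eq : (4 * 1 : R) = 2 ^ 2 := by norm_num
  rw [IsHyperbolic, discr_fin_two, A.det_coe, four_eq, sub_pos, sq_lt_sq, abs_two]

end LinearOrderedRing

section EuclideanField

variable {F : Type*} [Field F]

lemma exists_coe_eq_smul_of_isSquare_det {T : Matrix (Fin 2) (Fin 2) F} (hT : IsSquare T.det)
    (hT₀ : T.det ≠ 0) : ∃ (c : F) (H : SL(2, F)), (H : Matrix (Fin 2) (Fin 2) F) = c • T := by
  obtain ⟨s, hs⟩ := hT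
  have hs₀ : s ≠ 0 := by rintro rfl; exact hT₀ (by rw [hs, mul_zero])
  refine ⟨s⁻¹, ⟨s⁻¹ • T, ?_⟩, rfl⟩
  rw [det_smul, hs, Fintype.card_fin]
  field_simp

variable [LinearOrder F] [IsStrictOrderedRing F]

theorem exists_trace_mul_eq_zero_iff (hF : ∀ x : F, 0 ≤ x → IsSquare x)
    (M : Matrix (Fin 2) (Fin 2) F) :
    (∃ H : SL(2, F), trace (H : Matrix (Fin 2) (Fin 2) F) = 0 ∧
        trace (H * M : Matrix (Fin 2) (Fin 2) F) = 0) ↔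
      M.IsHyperbolic ∨ M ∈ Set.range (scalar (Fin 2)) := by
  constructor
  · rintro ⟨H, hH, hHM⟩
    exact isHyperbolic_or_mem_range_scalar (H.det_coe.symm ▸ one_pos) hH hHM
  · rintro (hM | hM)
    · have hdet : 0 < (halfTurnPerp M).det := by
        rw [det_halfTurnPerp]
        exact mul_pos hM (add_pos_of_pos_of_nonneg hM (sq_nonneg _))
      obtain ⟨c, H, hcoe⟩ := exists_coe_eq_smul_of_isSquare_det (hF _ hdet.le) hdet.ne'
      refine ⟨H, ?_, ?_⟩
      · rw [hcoe, trace_smul, trace_halfTurnPerp, smul_zero]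
      · rw [hcoe, smul_mul_assoc, trace_smul, trace_halfTurnPerp_mul, smul_zero]
    · exact exists_trace_eq_zero_of_mem_range_scalar hM

theorem stmt_10_general (hF : ∀ x : F, 0 ≤ x → IsSquare x) (A : SL(2, F)) :
    (∃ H K : SL(2, F), trace (H : Matrix (Fin 2) (Fin 2) F) = 0 ∧
        trace (K : Matrix (Fin 2) (Fin 2) F) = 0 ∧ A = H * K) ↔
      2 < |trace (A : Matrix (Fin 2) (Fin 2) F)| ∨ A = 1 ∨ A = -1 := by
  rw [exists_eq_mul_trace_eq_zero_iff, exists_trace_mul_eq_zero_iff hF, isHyperbolic_coe_iff,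
    coe_mem_range_scalar_iff]

end EuclideanField

/-- `A ∈ SL(2,ℝ)` factors as a product of two trace-zero elements of `SL(2,ℝ)`
(half-turns) iff `|tr A| > 2` or `A = ±1`. -/
theorem stmt_10 (A : Matrix.SpecialLinearGroup (Fin 2) ℝ) :
    (∃ H K : Matrix.SpecialLinearGroup (Fin 2) ℝ,
        Matrix.trace (H : Matrix (Fin 2) (Fin 2) ℝ) = 0 ∧
        Matrix.trace (K : Matrix (Fin 2) (Fin 2) ℝ) = 0 ∧ A = H * K) ↔
      2 < |Matrix.trace (A : Matrix (Fin 2) (Fin 2) ℝ)| ∨ A = 1 ∨ A = -1 :=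
  stmt_10_general (fun _ ↦ Real.isSquare_iff.mpr) A
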